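/- Let x ∈ ℝ^d be nonzero, let z' be a real Gaussian random variable with mean 0 and variance ‖x‖₂², and let y' = Σ_{i=1}^d x(i)·d_i where d_1,…,d_d are i.i.d. Rademacher random variables (±1 with probability 1/2 each). Then for every differentiable function g : ℝ → ℝ with |g(t)| ≤ 1 and |g'(t)| ≤ 1 for all t, one has |E[g(z')] − E[g(y')]| ≤ (3/2)·Σ_{i=1}^d |x(i)|³/‖x‖₂². -/

import Mathlib

open MeasureTheory ProbabilityTheory Real

/-- The Rademacher distribution on `ℝ`: `±1` each with probability `1/2`. -/
noncomputable def rademacher : Measure ℝ :=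
  (2 : ENNReal)⁻¹ • Measure.dirac 1 + (2 : ENNReal)⁻¹ • Measure.dirac (-1)

/-!
Stein's method. For a `K`-Lipschitz `h` and a standard Gaussian `Z`, let `f` be the bounded solution
of `f' w - w * f w = h w - E h(Z)`. When `h` is monotone, the bounds on Mills' ratio show that
`(w * f w)' ≤ 0`. Applied to the monotone functions `K * w ± h w`, whose solutions are `-K ± f`,
this gives `|(w * f w)'| ≤ K`, so `f'` is `2 * K`-Lipschitz by Stein's equation, with no second
derivative involved.

For `S = ∑ a i * ε i` with `∑ a i ^ 2 = 1`, Stein's equation turns `E h(S) - E h(Z)` into the sum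
over `i` of `E[a i ^ 2 * f' S - a i * ε i * f S]`. Averaging over the sign `ε i` makes the `i`-th
term `-a i / 2` times an error of the trapezoidal rule for `f'` on a segment of half-length `|a i|`,
hence at most `K * |a i| ^ 3`. Scaling by `‖x‖` reduces the general case to this one.
-/

open Set Filter Topology
open scoped NNReal

lemma integrable_comp_of_lipschitzWith {α E F : Type*} [MeasurableSpace α]
    [NormedAddCommGroup E] [NormedAddCommGroup F] {ν : Measure α} [IsFiniteMeasure ν] {K : ℝ≥0}
    {f : E → F} (hf : LipschitzWith K f) {u : α → E} (hu : Integrable u ν) :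
    Integrable (fun x ↦ f (u x)) ν := by
  refine ((integrable_const ‖f 0‖).add (hu.norm.const_mul K)).mono'
    (hf.continuous.comp_aestronglyMeasurable hu.aestronglyMeasurable) (ae_of_all _ fun x ↦ ?_)
  have := hf.norm_sub_le (u x) 0
  rw [sub_zero] at this
  exact (norm_le_norm_add_norm_sub' _ _).trans (add_le_add_right this _)

section GaussianReal

variable {μ : ℝ} {v : ℝ≥0}

lemma hasDerivAt_gaussianPDFReal (μ : ℝ) (v : ℝ≥0) (x : ℝ) :
    HasDerivAt (gaussianPDFReal μ v) (-((x - μ) / v) * gaussianPDFReal μ v x) x := by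
  have exponent : HasDerivAt (fun y ↦ -(y - μ) ^ 2 / (2 * v)) (-((x - μ) / v)) x := by
    refine ((((hasDerivAt_id' x).sub_const μ).fun_pow 2).neg.div_const (2 * (v : ℝ))).congr_deriv ?_
    rw [← mul_div_mul_left (x - μ) (v : ℝ) two_ne_zero]
    ring
  rw [gaussianPDFReal_def]
  exact (exponent.exp.const_mul _).congr_deriv (by ring)

lemma continuous_gaussianPDFReal (μ : ℝ) (v : ℝ≥0) : Continuous (gaussianPDFReal μ v) := by
  rw [gaussianPDFReal_def]
  fun_prop

lemma integrable_gaussianReal_iff (hv : v ≠ 0) {f : ℝ → ℝ} :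
    Integrable f (gaussianReal μ v) ↔ Integrable (fun x ↦ gaussianPDFReal μ v x * f x) := by
  rw [gaussianReal_of_var_ne_zero μ hv,
    integrable_withDensity_iff_integrable_smul' (measurable_gaussianPDF μ v)
      (ae_of_all _ fun _ ↦ gaussianPDF_lt_top)]
  simp only [toReal_gaussianPDF, smul_eq_mul]

lemma setIntegral_gaussianReal (hv : v ≠ 0) (f : ℝ → ℝ) (s : Set ℝ) :
    ∫ x in s, f x ∂gaussianReal μ v = ∫ x in s, gaussianPDFReal μ v x * f x := by
  rw [gaussianReal_of_var_ne_zero μ hv,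
    setIntegral_withDensity_eq_setIntegral_toReal_smul' s (measurable_gaussianPDF μ v)
      (ae_of_all _ fun _ ↦ gaussianPDF_lt_top)]
  simp only [toReal_gaussianPDF, smul_eq_mul]

lemma hasDerivAt_setIntegral_Iic_gaussianReal (hv : v ≠ 0) {f : ℝ → ℝ} (hf : Continuous f)
    (hfi : Integrable f (gaussianReal μ v)) (w : ℝ) :
    HasDerivAt (fun u ↦ ∫ x in Iic u, f x ∂gaussianReal μ v) (gaussianPDFReal μ v w * f w) w := by
  simp only [setIntegral_gaussianReal hv]
  have hi := (integrable_gaussianReal_iff hv).1 hfi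
  have hc : Continuous fun x ↦ gaussianPDFReal μ v x * f x :=
    (continuous_gaussianPDFReal μ v).mul hf
  have split (u : ℝ) : ∫ x in Iic u, gaussianPDFReal μ v x * f x =
      (∫ x in Iic w, gaussianPDFReal μ v x * f x) + ∫ x in w..u, gaussianPDFReal μ v x * f x := by
    rw [← intervalIntegral.integral_Iic_sub_Iic hi.integrableOn hi.integrableOn,
      add_sub_cancel]
  rw [funext split]
  exact (hc.integral_hasStrictDerivAt w w).hasDerivAt.const_add _

lemma integrable_id_gaussianReal (μ : ℝ) (v : ℝ≥0) :
    Integrable (fun x ↦ x) (gaussianReal μ v) :=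
  (memLp_id_gaussianReal 1).integrable le_rfl

lemma integrable_deriv_gaussianPDFReal (hv : v ≠ 0) :
    Integrable fun x ↦ -((x - μ) / v) * gaussianPDFReal μ v x := by
  have h := ((integrable_id_gaussianReal μ v).sub (integrable_const μ)).div_const (v : ℝ) |>.neg
  exact ((integrable_gaussianReal_iff hv).1 h).congr (ae_of_all _ fun x ↦ mul_comm _ _)

lemma tendsto_gaussianPDFReal_atBot (hv : v ≠ 0) :
    Tendsto (gaussianPDFReal μ v) atBot (𝓝 0) :=
  tendsto_zero_of_hasDerivAt_of_integrableOn_Iic (a := 0)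
    (fun x _ ↦ hasDerivAt_gaussianPDFReal μ v x)
    (integrable_deriv_gaussianPDFReal hv).integrableOn
    (integrable_gaussianPDFReal μ v).integrableOn

lemma setIntegral_Iic_sub_mean_gaussianReal (hv : v ≠ 0) (w : ℝ) :
    ∫ x in Iic w, (x - μ) ∂gaussianReal μ v = -(v * gaussianPDFReal μ v w) := by
  have h := integral_Iic_of_hasDerivAt_of_tendsto'
    (fun x (_ : x ∈ Iic w) ↦ hasDerivAt_gaussianPDFReal μ v x)
    (integrable_deriv_gaussianPDFReal hv).integrableOn (tendsto_gaussianPDFReal_atBot hv)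
  have hv' : (v : ℝ) ≠ 0 := NNReal.coe_ne_zero.2 hv
  rw [sub_zero] at h
  rw [setIntegral_gaussianReal hv, ← h, ← integral_const_mul, ← integral_neg]
  congr with x
  field_simp

end GaussianReal

local notation "γ" => gaussianReal 0 1
local notation "φ" => gaussianPDFReal 0 1

lemma hasDerivAt_gaussianReal_real_Iic (w : ℝ) :
    HasDerivAt (fun u ↦ (γ).real (Iic u)) (φ w) w := by
  simpa using hasDerivAt_setIntegral_Iic_gaussianReal (μ := 0) one_ne_zero
    (continuous_const (y := (1 : ℝ))) (integrable_const 1) w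

lemma neg_div_mul_gaussianPDFReal_le_real_Iic (w : ℝ) :
    -w / (1 + w ^ 2) * φ w ≤ (γ).real (Iic w) := by
  have pos (t : ℝ) : 0 < 1 + t ^ 2 := by positivity
  have hasDerivAt_gap (t : ℝ) : HasDerivAt (fun t ↦ (γ).real (Iic t) + t / (1 + t ^ 2) * φ t)
      (2 / (1 + t ^ 2) ^ 2 * φ t) t := by
    have hquot : HasDerivAt (fun t : ℝ ↦ t / (1 + t ^ 2)) _ t :=
      (hasDerivAt_id' t).div ((hasDerivAt_pow 2 t).const_add 1) (pos t).ne'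
    refine ((hasDerivAt_gaussianReal_real_Iic t).add
      (hquot.mul (hasDerivAt_gaussianPDFReal 0 1 t))).congr_deriv ?_
    have := (pos t).ne'
    simp only [NNReal.coe_one]
    field_simp
    ring
  have gap_monotone : Monotone fun t ↦ (γ).real (Iic t) + t / (1 + t ^ 2) * φ t :=
    monotone_of_hasDerivAt_nonneg hasDerivAt_gap fun t ↦
      mul_nonneg (by positivity) (gaussianPDFReal_nonneg 0 1 t)
  have tendsto_cdf : Tendsto (fun t ↦ (γ).real (Iic t)) atBot (𝓝 0) :=
    (tendsto_cdf_atBot γ).congr fun t ↦ cdf_eq_real γ t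
  have tendsto_pdf : Tendsto (fun t ↦ t / (1 + t ^ 2) * φ t) atBot (𝓝 0) := by
    refine squeeze_zero_norm (fun t ↦ ?_) (tendsto_gaussianPDFReal_atBot (μ := 0) one_ne_zero)
    rw [norm_mul, Real.norm_of_nonneg (gaussianPDFReal_nonneg 0 1 t)]
    refine mul_le_of_le_one_left (gaussianPDFReal_nonneg 0 1 t) ?_
    rw [Real.norm_eq_abs, abs_div, abs_of_pos (pos t), div_le_one (pos t)]
    nlinarith [sq_abs t, sq_nonneg (|t| - 1), abs_nonneg t]
  have := gap_monotone.le_of_tendsto (by simpa using tendsto_cdf.add tendsto_pdf) w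
  rw [neg_div, neg_mul]
  linarith

lemma div_mul_gaussianPDFReal_le_real_Ioi (w : ℝ) :
    w / (1 + w ^ 2) * φ w ≤ (γ).real (Ioi w) := by
  have := nullSingletonClass_gaussianReal (μ := 0) one_ne_zero
  have reflect : (γ).real (Iic (-w)) = (γ).real (Ioi w) := by
    rw [← measureReal_congr Iio_ae_eq_Iic]
    nth_rewrite 1 [← neg_zero (G := ℝ)]
    rw [← gaussianReal_map_neg, map_measureReal_apply measurable_neg measurableSet_Iio]
    simp
  simpa [reflect, gaussianPDFReal] using neg_div_mul_gaussianPDFReal_le_real_Iic (-w)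

/-- The bounded solution `f` of Stein's equation `f' w - w * f w = h w - E h(Z)` for a standard
Gaussian `Z`, written through the integral of the right-hand side over `(-∞, w]`. -/
noncomputable def steinSolution (h : ℝ → ℝ) (w : ℝ) : ℝ :=
  (∫ t in Iic w, (h t - ∫ s, h s ∂γ) ∂γ) / φ w

section SteinSolution

variable {g h : ℝ → ℝ}

lemma steinSolution_neg (h : ℝ → ℝ) : steinSolution (-h) = -steinSolution h := by
  ext w
  simp only [steinSolution, Pi.neg_apply, integral_neg, ← neg_sub', neg_div]

lemma steinSolution_add (hg : Integrable g γ) (hh : Integrable h γ) :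
    steinSolution (g + h) = steinSolution g + steinSolution h := by
  ext w
  have hg' : Integrable (fun t ↦ g t - ∫ s, g s ∂γ) γ := hg.sub (integrable_const _)
  have hh' : Integrable (fun t ↦ h t - ∫ s, h s ∂γ) γ := hh.sub (integrable_const _)
  simp only [steinSolution, Pi.add_apply, integral_add hg hh, add_sub_add_comm,
    integral_add hg'.integrableOn hh'.integrableOn, add_div]

lemma steinSolution_const_mul_id (c w : ℝ) : steinSolution (fun t ↦ c * t) w = -c := by
  have hw : φ w ≠ 0 := (gaussianPDFReal_pos 0 1 w one_ne_zero).ne'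
  rw [steinSolution, integral_const_mul, integral_id_gaussianReal]
  simp only [← mul_sub]
  rw [integral_const_mul, setIntegral_Iic_sub_mean_gaussianReal one_ne_zero, NNReal.coe_one]
  field_simp

lemma hasDerivAt_steinSolution (hc : Continuous h) (hi : Integrable h γ) (w : ℝ) :
    HasDerivAt (steinSolution h) (w * steinSolution h w + (h w - ∫ s, h s ∂γ)) w := by
  have hw : φ w ≠ 0 := (gaussianPDFReal_pos 0 1 w one_ne_zero).ne'
  have hc' : Continuous fun t ↦ h t - ∫ s, h s ∂γ := hc.sub continuous_const
  have hi' : Integrable (fun t ↦ h t - ∫ s, h s ∂γ) γ := hi.sub (integrable_const _)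
  refine ((hasDerivAt_setIntegral_Iic_gaussianReal one_ne_zero hc' hi' w).div
    (hasDerivAt_gaussianPDFReal 0 1 w) hw).congr_deriv ?_
  simp only [steinSolution, sub_zero, NNReal.coe_one, div_one]
  field_simp
  ring

lemma hasDerivAt_id_mul_steinSolution (hc : Continuous h) (hi : Integrable h γ) (w : ℝ) :
    HasDerivAt (fun u ↦ u * steinSolution h u)
      ((1 + w ^ 2) * steinSolution h w + w * (h w - ∫ s, h s ∂γ)) w :=
  ((hasDerivAt_id' w).mul (hasDerivAt_steinSolution hc hi w)).congr_deriv (by ring)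

lemma one_add_sq_mul_steinSolution_add_nonpos_of_monotone (hm : Monotone h)
    (hi : Integrable h γ) (w : ℝ) :
    (1 + w ^ 2) * steinSolution h w + w * (h w - ∫ s, h s ∂γ) ≤ 0 := by
  set k : ℝ → ℝ := fun t ↦ h t - ∫ s, h s ∂γ with hk
  have hki : Integrable k γ := hi.sub (integrable_const _)
  have lower : ∫ t in Iic w, k t ∂γ ≤ (γ).real (Iic w) * k w := by
    rw [← smul_eq_mul, ← setIntegral_const]
    exact setIntegral_mono_on hki.integrableOn (integrable_const _) measurableSet_Iic
      fun t ht ↦ sub_le_sub_right (hm ht) _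
  have upper : (γ).real (Ioi w) * k w ≤ ∫ t in Ioi w, k t ∂γ := by
    rw [← smul_eq_mul, ← setIntegral_const]
    exact setIntegral_mono_on (integrable_const _) hki.integrableOn measurableSet_Ioi
      fun t ht ↦ sub_le_sub_right (hm (le_of_lt ht)) _
  have centered : (∫ t in Iic w, k t ∂γ) + ∫ t in Ioi w, k t ∂γ = 0 := by
    rw [intervalIntegral.integral_Iic_add_Ioi hki.integrableOn hki.integrableOn]
    simp [hk, integral_sub hi (integrable_const _)]
  have partial_le : ∫ t in Iic w, k t ∂γ ≤ -w / (1 + w ^ 2) * φ w * k w := by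
    rcases le_total (k w) 0 with hneg | hpos
    · exact lower.trans
        (mul_le_mul_of_nonpos_right (neg_div_mul_gaussianPDFReal_le_real_Iic w) hneg)
    · have := mul_le_mul_of_nonneg_right (div_mul_gaussianPDFReal_le_real_Ioi w) hpos
      rw [neg_div]
      linarith
  have hφ : 0 < φ w := gaussianPDFReal_pos 0 1 w one_ne_zero
  calc (1 + w ^ 2) * steinSolution h w + w * k w
      = (1 + w ^ 2) * (∫ t in Iic w, k t ∂γ) / φ w + w * k w := by
        rw [steinSolution, mul_div_assoc]
    _ ≤ (1 + w ^ 2) * (-w / (1 + w ^ 2) * φ w * k w) / φ w + w * k w := by gcongr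
    _ = 0 := by field_simp; ring

variable {K : ℝ≥0}

lemma monotone_const_mul_add (hh : LipschitzWith K h) : Monotone ((fun t ↦ (K : ℝ) * t) + h) := by
  intro s t hst
  have := hh.dist_le_mul s t
  rw [Real.dist_eq, dist_comm, Real.dist_eq, abs_of_nonneg (sub_nonneg.2 hst)] at this
  have := le_of_abs_le this
  simp only [Pi.add_apply]
  linarith

lemma one_add_sq_mul_steinSolution_add_le_of_lipschitzWith (hh : LipschitzWith K h) (w : ℝ) :
    (1 + w ^ 2) * steinSolution h w + w * (h w - ∫ s, h s ∂γ) ≤ K := by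
  have hid : Integrable (fun t ↦ (K : ℝ) * t) γ := (integrable_id_gaussianReal 0 1).const_mul _
  have hi : Integrable h γ := integrable_comp_of_lipschitzWith hh (integrable_id_gaussianReal 0 1)
  have := one_add_sq_mul_steinSolution_add_nonpos_of_monotone (monotone_const_mul_add hh)
    (hid.add hi) w
  rw [integral_add' hid hi, integral_const_mul, integral_id_gaussianReal, steinSolution_add hid hi,
    Pi.add_apply, Pi.add_apply, steinSolution_const_mul_id] at this
  linarith

lemma abs_one_add_sq_mul_steinSolution_add_le_of_lipschitzWith (hh : LipschitzWith K h) (w : ℝ) :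
    |(1 + w ^ 2) * steinSolution h w + w * (h w - ∫ s, h s ∂γ)| ≤ (K : ℝ) := by
  have hneg := one_add_sq_mul_steinSolution_add_le_of_lipschitzWith hh.neg w
  simp only [steinSolution_neg, Pi.neg_apply, integral_neg] at hneg
  exact abs_le.2 ⟨by linarith, one_add_sq_mul_steinSolution_add_le_of_lipschitzWith hh w⟩

lemma lipschitzWith_id_mul_steinSolution (hh : LipschitzWith K h) :
    LipschitzWith K fun w ↦ w * steinSolution h w := by
  have hderiv := hasDerivAt_id_mul_steinSolution hh.continuous
    (integrable_comp_of_lipschitzWith hh (integrable_id_gaussianReal 0 1))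
  refine lipschitzWith_of_nnnorm_deriv_le (fun w ↦ (hderiv w).differentiableAt) fun w ↦ ?_
  rw [(hderiv w).deriv, ← NNReal.coe_le_coe, coe_nnnorm, Real.norm_eq_abs]
  exact abs_one_add_sq_mul_steinSolution_add_le_of_lipschitzWith hh w

lemma lipschitzWith_deriv_steinSolution (hh : LipschitzWith K h) :
    LipschitzWith (2 * K) fun w ↦ w * steinSolution h w + (h w - ∫ s, h s ∂γ) := by
  rw [two_mul]
  refine (lipschitzWith_id_mul_steinSolution hh).add ?_
  simpa only [add_zero] using hh.sub (LipschitzWith.const (∫ s, h s ∂γ))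

end SteinSolution

section Trapezoid

variable {E : Type*} [NormedAddCommGroup E] [NormedSpace ℝ E] {f f' : ℝ → E} {K : ℝ≥0}

lemma norm_sub_sub_smul_le_of_lipschitzWith_deriv_of_nonneg
    (hf : ∀ w, HasDerivAt f (f' w) w) (hf' : LipschitzWith K f') (p : ℝ) {b : ℝ} (hb : 0 ≤ b) :
    ‖f (p + b) - f (p - b) - b • (f' (p + b) + f' (p - b))‖ ≤ K * b ^ 2 := by
  set c := f' (p + b) + f' (p - b) with hc
  set ψ : ℝ → E := fun s ↦ f (p + s) - f (p - s) - s • c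
  have hasDerivAt_error (s : ℝ) : HasDerivAt ψ (f' (p + s) + f' (p - s) - c) s := by
    have hneg := (hf (p - s)).comp_const_sub p s
    have hsmul : HasDerivAt (fun s : ℝ ↦ s • c) c s := by
      simpa only [one_smul] using (hasDerivAt_id' s).smul_const c
    refine ((((hf (p + s)).comp_const_add p s).sub hneg).sub hsmul).congr_deriv ?_
    rw [sub_neg_eq_add]
  have hasDerivAt_bound (s : ℝ) :
      HasDerivAt (fun s ↦ K * (2 * b * s - s ^ 2)) (2 * K * (b - s)) s := by
    refine (((hasDerivAt_id' s).const_mul (2 * b)).sub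
      (hasDerivAt_pow 2 s)).const_mul (K : ℝ) |>.congr_deriv ?_
    ring
  have norm_deriv_le {s : ℝ} (hs : s ≤ b) : ‖f' (p + s) + f' (p - s) - c‖ ≤ 2 * K * (b - s) := by
    have hplus := hf'.norm_sub_le (p + s) (p + b)
    have hminus := hf'.norm_sub_le (p - s) (p - b)
    rw [add_sub_add_left_eq_sub, norm_sub_rev s b, Real.norm_of_nonneg (sub_nonneg.2 hs)] at hplus
    rw [sub_sub_sub_cancel_left, Real.norm_of_nonneg (sub_nonneg.2 hs)] at hminus
    rw [hc, add_sub_add_comm]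
    linarith [norm_add_le (f' (p + s) - f' (p + b)) (f' (p - s) - f' (p - b))]
  have := image_norm_le_of_norm_deriv_right_le_deriv_boundary (a := 0) (b := b)
    (fun s _ ↦ (hasDerivAt_error s).continuousAt.continuousWithinAt)
    (fun s _ ↦ (hasDerivAt_error s).hasDerivWithinAt) (by simp [ψ])
    hasDerivAt_bound (fun s hs ↦ norm_deriv_le hs.2.le) (right_mem_Icc.2 hb)
  linarith

/-- This is the error of the trapezoidal rule for the integral of `f'` over `[p - b, p + b]`. -/
lemma norm_sub_sub_smul_le_of_lipschitzWith_deriv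
    (hf : ∀ w, HasDerivAt f (f' w) w) (hf' : LipschitzWith K f') (p b : ℝ) :
    ‖f (p + b) - f (p - b) - b • (f' (p + b) + f' (p - b))‖ ≤ K * b ^ 2 := by
  rcases le_total 0 b with hb | hb
  · exact norm_sub_sub_smul_le_of_lipschitzWith_deriv_of_nonneg hf hf' p hb
  · have := norm_sub_sub_smul_le_of_lipschitzWith_deriv_of_nonneg hf hf' p (neg_nonneg.2 hb)
    rw [neg_sq, sub_neg_eq_add, ← sub_eq_add_neg] at this
    have odd : f (p + b) - f (p - b) - b • (f' (p + b) + f' (p - b)) =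
        -(f (p - b) - f (p + b) - -b • (f' (p - b) + f' (p + b))) := by module
    rwa [odd, norm_neg]

lemma abs_sq_mul_deriv_sub_mul_add_le {f f' : ℝ → ℝ} (hf : ∀ w, HasDerivAt f (f' w) w)
    (hf' : LipschitzWith K f') (p b : ℝ) :
    |(b ^ 2 * f' (p + b) - b * f (p + b)) + (b ^ 2 * f' (p - b) + b * f (p - b))| ≤
      K * |b| ^ 3 := by
  have factor : (b ^ 2 * f' (p + b) - b * f (p + b)) + (b ^ 2 * f' (p - b) + b * f (p - b)) =
      -(b * (f (p + b) - f (p - b) - b • (f' (p + b) + f' (p - b)))) := by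
    rw [smul_eq_mul]
    ring
  calc _ = |b| * ‖f (p + b) - f (p - b) - b • (f' (p + b) + f' (p - b))‖ := by
        rw [factor, abs_neg, abs_mul, Real.norm_eq_abs]
    _ ≤ |b| * (K * b ^ 2) := by
        gcongr
        exact norm_sub_sub_smul_le_of_lipschitzWith_deriv hf hf' p b
    _ = K * |b| ^ 3 := by
        rw [← sq_abs b]
        ring

end Trapezoid

lemma measurePreserving_update {ι : Type*} [Fintype ι] [DecidableEq ι] {α : ι → Type*}
    [∀ i, MeasurableSpace (α i)] (μ : ∀ i, Measure (α i)) [∀ i, SigmaFinite (μ i)] {i : ι}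
    {T : α i → α i} (hT : MeasurePreserving T (μ i) (μ i)) :
    MeasurePreserving (fun ω ↦ Function.update ω i (T (ω i))) (Measure.pi μ) (Measure.pi μ) := by
  have coordinatewise (ω : ∀ j, α j) : Function.update ω i (T (ω i)) =
      fun j ↦ Function.update (fun j ↦ (id : α j → α j)) i T j (ω j) := by
    ext j
    obtain rfl | hj := eq_or_ne j i <;> simp [*]
  simp only [coordinatewise]
  refine measurePreserving_pi μ μ fun j ↦ ?_
  obtain rfl | hj := eq_or_ne j i
  · simpa using hT
  · simpa [hj] using MeasurePreserving.id _

lemma sum_mul_update {ι R : Type*} [Fintype ι] [DecidableEq ι] [Ring R] (a ε : ι → R) (i : ι)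
    (s : R) : ∑ j, a j * Function.update ε i s j = ∑ j, a j * ε j + a i * (s - ε i) := by
  rw [← sub_eq_iff_eq_add', ← Finset.sum_sub_distrib, Finset.sum_eq_single i]
  · rw [Function.update_self, mul_sub]
  · intro j _ hj
    rw [Function.update_of_ne hj, sub_self]
  · simp

section Rademacher

instance : IsProbabilityMeasure rademacher :=
  ⟨by simp [rademacher, ENNReal.inv_two_add_inv_two]⟩

lemma ae_rademacher_sq_eq_one : ∀ᵐ t ∂rademacher, t ^ 2 = 1 := by
  have hm : MeasurableSet {t : ℝ | t ^ 2 = 1} := measurableSet_eq_fun (by fun_prop) (by fun_prop)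
  rw [rademacher, ae_add_measure_iff]
  constructor <;> refine Measure.ae_smul_measure ?_ _ <;> rw [ae_dirac_iff hm] <;> norm_num

lemma measurePreserving_neg_rademacher : MeasurePreserving Neg.neg rademacher rademacher := by
  refine ⟨measurable_neg, ?_⟩
  rw [rademacher, Measure.map_add _ _ measurable_neg, Measure.map_smul, Measure.map_smul,
    Measure.map_dirac' measurable_neg, Measure.map_dirac' measurable_neg, neg_neg, add_comm]

/-- The law of a family of independent Rademacher signs indexed by `ι`. -/
noncomputable abbrev rademacherPi (ι : Type*) [Fintype ι] : Measure (ι → ℝ) :=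
  Measure.pi fun _ : ι ↦ rademacher

variable {ι : Type*} [Fintype ι]

lemma ae_rademacherPi_sq_eq_one : ∀ᵐ ε ∂rademacherPi ι, ∀ i, ε i ^ 2 = 1 :=
  ae_all_iff.2 fun _ ↦ (Measure.tendsto_eval_ae_ae (μ := fun _ : ι ↦ rademacher)).eventually
    ae_rademacher_sq_eq_one

lemma integrable_rademacherPi {E : Type*} [NormedAddCommGroup E] {F : (ι → ℝ) → E}
    (hF : Continuous F) : Integrable F (rademacherPi ι) := by
  have hcube : IsCompact (Set.pi univ fun _ : ι ↦ Icc (-1 : ℝ) 1) :=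
    isCompact_univ_pi fun _ ↦ isCompact_Icc
  have h := hF.continuousOn.integrableOn_compact (μ := rademacherPi ι) hcube
  rwa [IntegrableOn, Measure.restrict_eq_self_of_ae_mem] at h
  filter_upwards [ae_rademacherPi_sq_eq_one] with ε hε i _
  exact abs_le.1 ((sq_le_one_iff_abs_le_one _).1 (hε i).le)

lemma two_mul_integral_rademacherPi [DecidableEq ι] {F : (ι → ℝ) → ℝ} (hF : Continuous F)
    (i : ι) :
    2 * ∫ ε, F ε ∂rademacherPi ι =
      ∫ ε, (F ε + F (Function.update ε i (-ε i))) ∂rademacherPi ι := by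
  have hflip := measurePreserving_update (fun _ : ι ↦ rademacher) (i := i)
    measurePreserving_neg_rademacher
  have hFflip : Continuous fun ε : ι → ℝ ↦ F (Function.update ε i (-ε i)) :=
    hF.comp (continuous_id.update i (continuous_apply i).neg)
  rw [integral_add (integrable_rademacherPi hF) (integrable_rademacherPi hFflip), two_mul]
  congr 1
  rw [← integral_map hflip.measurable.aemeasurable hF.aestronglyMeasurable, hflip.map_eq]

variable {f f' : ℝ → ℝ} {K : ℝ≥0}

lemma abs_integral_sq_mul_deriv_sub_le (hf : ∀ w, HasDerivAt f (f' w) w)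
    (hf' : LipschitzWith K f') (a : ι → ℝ) (i : ι) :
    |∫ ε, (a i ^ 2 * f' (∑ j, a j * ε j) - a i * ε i * f (∑ j, a j * ε j)) ∂rademacherPi ι| ≤
      K / 2 * |a i| ^ 3 := by
  classical
  have hfc : Continuous f := continuous_iff_continuousAt.2 fun w ↦ (hf w).continuousAt
  have hfc' : Continuous f' := hf'.continuous
  set F : (ι → ℝ) → ℝ := fun ε ↦ a i ^ 2 * f' (∑ j, a j * ε j) - a i * ε i * f (∑ j, a j * ε j)
    with hF
  have flip_bound (ε : ι → ℝ) (hε : ε i ^ 2 = 1) :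
      |F ε + F (Function.update ε i (-ε i))| ≤ K * |a i| ^ 3 := by
    set b := a i * ε i with hb
    set p := ∑ j, a j * ε j - b with hp
    have hb_sq : b ^ 2 = a i ^ 2 := by rw [hb, mul_pow, hε, mul_one]
    have hsum : ∑ j, a j * ε j = p + b := (sub_add_cancel _ _).symm
    have hsum_flip : ∑ j, a j * Function.update ε i (-ε i) j = p - b := by
      rw [sum_mul_update, hp, hb]
      ring
    simp only [hF, hsum, hsum_flip, Function.update_self, mul_neg, neg_mul, sub_neg_eq_add, ← hb,
      ← hb_sq, ← (sq_eq_sq_iff_abs_eq_abs _ _).1 hb_sq]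
    exact abs_sq_mul_deriv_sub_mul_add_le hf hf' p b
  have hbound : ‖2 * ∫ ε, F ε ∂rademacherPi ι‖ ≤ K * |a i| ^ 3 := by
    rw [two_mul_integral_rademacherPi (by fun_prop) i]
    refine (norm_integral_le_of_norm_le_const (C := K * |a i| ^ 3) ?_).trans (by simp)
    exact ae_rademacherPi_sq_eq_one.mono fun ε hε ↦ flip_bound ε (hε i)
  rw [norm_mul, Real.norm_two, Real.norm_eq_abs] at hbound
  linarith

lemma abs_integral_gaussianReal_sub_integral_rademacherPi_le {h : ℝ → ℝ}
    (hh : LipschitzWith K h) {a : ι → ℝ} (ha : ∑ i, a i ^ 2 = 1) :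
    |(∫ t, h t ∂γ) - ∫ ε, h (∑ i, a i * ε i) ∂rademacherPi ι| ≤ K * ∑ i, |a i| ^ 3 := by
  set f := steinSolution h
  set f' : ℝ → ℝ := fun w ↦ w * f w + (h w - ∫ t, h t ∂γ) with hf'_def
  have hf : ∀ w, HasDerivAt f (f' w) w := hasDerivAt_steinSolution hh.continuous
    (integrable_comp_of_lipschitzWith hh (integrable_id_gaussianReal 0 1))
  have hf' : LipschitzWith (2 * K) f' := lipschitzWith_deriv_steinSolution hh
  have hfc : Continuous f := continuous_iff_continuousAt.2 fun w ↦ (hf w).continuousAt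
  have hfc' : Continuous f' := hf'.continuous
  have hhc : Continuous h := hh.continuous
  have stein_equation (ε : ι → ℝ) : h (∑ i, a i * ε i) - ∫ t, h t ∂γ =
      ∑ i, (a i ^ 2 * f' (∑ j, a j * ε j) - a i * ε i * f (∑ j, a j * ε j)) := by
    rw [Finset.sum_sub_distrib, ← Finset.sum_mul, ← Finset.sum_mul, ha, one_mul, hf'_def]
    ring
  calc |(∫ t, h t ∂γ) - ∫ ε, h (∑ i, a i * ε i) ∂rademacherPi ι|
      = |∫ ε, (h (∑ i, a i * ε i) - ∫ t, h t ∂γ) ∂rademacherPi ι| := by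
        rw [integral_sub (integrable_rademacherPi (by fun_prop)) (integrable_const _),
          integral_const, probReal_univ, one_smul, abs_sub_comm]
    _ = |∑ i, ∫ ε, (a i ^ 2 * f' (∑ j, a j * ε j) - a i * ε i * f (∑ j, a j * ε j))
          ∂rademacherPi ι| := by
        rw [← integral_finsetSum _ fun i _ ↦ integrable_rademacherPi (by fun_prop)]
        simp only [stein_equation]
    _ ≤ ∑ i, (2 * K : ℝ≥0) / 2 * |a i| ^ 3 :=
        (Finset.abs_sum_le_sum_abs _ _).trans
          (Finset.sum_le_sum fun i _ ↦ abs_integral_sq_mul_deriv_sub_le hf hf' a i)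
    _ = K * ∑ i, |a i| ^ 3 := by
        rw [Finset.mul_sum, NNReal.coe_mul, NNReal.coe_ofNat, mul_div_cancel_left₀ _ two_ne_zero]

end Rademacher

theorem stmt_11_general {ι : Type*} [Fintype ι] (x : EuclideanSpace ℝ ι) (hx : x ≠ 0) {K : ℝ≥0}
    {g : ℝ → ℝ} (hg : LipschitzWith K g) :
    |(∫ t, g t ∂gaussianReal 0 (‖x‖₊ ^ 2)) - ∫ ε, g (∑ i, x i * ε i) ∂rademacherPi ι| ≤
      K * ∑ i, |x i| ^ 3 / ‖x‖ ^ 2 := by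
  have hσ : ‖x‖ ≠ 0 := norm_ne_zero_iff.2 hx
  have unit : ∑ i, (x i / ‖x‖) ^ 2 = 1 := by
    simp only [div_pow, ← Finset.sum_div, ← EuclideanSpace.real_norm_sq_eq]
    exact div_self (pow_ne_zero 2 hσ)
  have gaussian_scaling :
      ∫ t, g t ∂gaussianReal 0 (‖x‖₊ ^ 2) = ∫ t, g (‖x‖ * t) ∂γ := by
    have hmap : gaussianReal 0 (‖x‖₊ ^ 2) = (γ).map (‖x‖ * ·) := by
      rw [gaussianReal_map_const_mul, mul_zero, mul_one]
      congr 1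
    rw [hmap, integral_map (by fun_prop) hg.continuous.aestronglyMeasurable]
  have sum_scaling (ε : ι → ℝ) : ‖x‖ * ∑ i, x i / ‖x‖ * ε i = ∑ i, x i * ε i := by
    rw [Finset.mul_sum]
    exact Finset.sum_congr rfl fun i _ ↦ by rw [← mul_assoc, mul_div_cancel₀ _ hσ]
  have hlip : LipschitzWith (K * ‖x‖₊) fun t ↦ g (‖x‖ * t) :=
    hg.comp (nnnorm_norm x ▸ lipschitzWith_smul ‖x‖)
  have comparison := abs_integral_gaussianReal_sub_integral_rademacherPi_le hlip unit
  simp only [sum_scaling, ← gaussian_scaling] at comparison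
  refine comparison.trans_eq ?_
  rw [NNReal.coe_mul, coe_nnnorm, mul_assoc, Finset.mul_sum]
  congr! 2 with i
  rw [abs_div, abs_norm]
  field_simp

/-- Stein-type comparison. For nonzero `x ∈ ℝ^d`, a Gaussian `z'` with mean 0
and variance `‖x‖₂²`, and `y' = Σᵢ x(i)·dᵢ` with `dᵢ` i.i.d. Rademacher, every differentiable
`g : ℝ → ℝ` with `|g| ≤ 1` and `|g'| ≤ 1` satisfies
`|E[g(z')] − E[g(y')]| ≤ (3/2)·Σᵢ |x(i)|³/‖x‖₂²`. -/
theorem stmt_11 (d : ℕ) (x : EuclideanSpace ℝ (Fin d)) (hx : x ≠ 0)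
    (g : ℝ → ℝ) (hg : Differentiable ℝ g)
    (hg1 : ∀ t, |g t| ≤ 1) (hg2 : ∀ t, |deriv g t| ≤ 1) :
    |(∫ t, g t ∂(gaussianReal 0 (‖x‖₊ ^ 2)))
        - ∫ ε, g (∑ i, x i * ε i) ∂(Measure.pi fun _ : Fin d => rademacher)|
      ≤ 3 / 2 * ∑ i, |x i| ^ 3 / ‖x‖ ^ 2 := by
  calc _ ≤ ((1 : ℝ≥0) : ℝ) * ∑ i, |x i| ^ 3 / ‖x‖ ^ 2 :=
        stmt_11_general x hx (lipschitzWith_of_nnnorm_deriv_le hg hg2)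
    _ ≤ 3 / 2 * ∑ i, |x i| ^ 3 / ‖x‖ ^ 2 := by
        gcongr
        norm_num
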